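/- arXiv:quant-ph/0511149 — 2 statements merged into one kernel-verified Lean document; each statement's English description precedes it below -/
import Mathlib

section
/- Let G be a finite group, let (σ_j)_{j∈J} be a complete family of irreducibles for G, let ρ be any unitary representation of G on a finite-dimensional complex inner product space V, and let M ⊆ G be a conjugacy class of involutions with representative m₀. Then for every b ∈ V, (1/|M|) Σ_{m∈M} |⟨b, ρ(m) b⟩|² = Σ_{j∈J} (χ_j(m₀)/d_j) · (d_j/|G|) Σ_{g∈G} conj(χ_j(g)) |⟨b, ρ(g) b⟩|², as an identity of complex numbers (both sides are in fact real). -/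
noncomputable section

open scoped BigOperators InnerProductSpace

def IsUnitaryRep {G V : Type*} [Group G] [NormedAddCommGroup V] [InnerProductSpace ℂ V]
    (ρ : Representation ℂ G V) : Prop :=
  ∀ (g : G) (v w : V), ⟪ρ g v, ρ g w⟫_ℂ = ⟪v, w⟫_ℂ

def IsIrreducibleRep {G V : Type*} [Group G] [AddCommGroup V] [Module ℂ V]
    (ρ : Representation ℂ G V) : Prop :=
  (∃ v : V, v ≠ 0) ∧
    ∀ W : Submodule ℂ V, (∀ (g : G) (v : V), v ∈ W → ρ g v ∈ W) → W = ⊥ ∨ W = ⊤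

def RepIso {G V₁ V₂ : Type*} [Group G] [AddCommGroup V₁] [Module ℂ V₁]
    [AddCommGroup V₂] [Module ℂ V₂]
    (ρ₁ : Representation ℂ G V₁) (ρ₂ : Representation ℂ G V₂) : Prop :=
  ∃ e : V₁ ≃ₗ[ℂ] V₂, ∀ (g : G) (v : V₁), e (ρ₁ g v) = ρ₂ g (e v)

def repChar {G V : Type*} [Group G] [AddCommGroup V] [Module ℂ V]
    (ρ : Representation ℂ G V) (g : G) : ℂ := LinearMap.trace ℂ V (ρ g)

def IsCompleteFamily {G : Type*} [Group G] {J : Type*}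
    (W : J → Type*) [∀ j, NormedAddCommGroup (W j)] [∀ j, InnerProductSpace ℂ (W j)]
    [∀ j, FiniteDimensional ℂ (W j)]
    (σ : ∀ j, Representation ℂ G (W j)) : Prop :=
  (∀ j, IsUnitaryRep (σ j)) ∧ (∀ j, IsIrreducibleRep (σ j)) ∧
    (∀ j j', j ≠ j' → ¬ RepIso (σ j) (σ j')) ∧
    (∀ (U : Type) [AddCommGroup U] [Module ℂ U] [FiniteDimensional ℂ U]
      (τ : Representation ℂ G U), IsIrreducibleRep τ → ∃ j, RepIso τ (σ j))

def isoProj {G V : Type*} [Group G] [Fintype G] [AddCommGroup V] [Module ℂ V]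
    (d : ℕ) (χ : G → ℂ) (ρ : Representation ℂ G V) : V →ₗ[ℂ] V :=
  ((d : ℂ) / (Fintype.card G : ℂ)) • ∑ g : G, starRingEnd ℂ (χ g) • (ρ g : V →ₗ[ℂ] V)

def onI {G : Type*} [One G] {k : ℕ} (g : G) (I : Finset (Fin k)) : Fin k → G :=
  fun i => if i ∈ I then g else 1

def invProj {G V : Type*} [Group G] [AddCommGroup V] [Module ℂ V] {k : ℕ}
    (ρ : Representation ℂ (Fin k → G) V) (m : G) : V →ₗ[ℂ] V :=
  ((2 : ℂ) ^ k)⁻¹ • ∑ I : Finset (Fin k), (ρ (onI m I) : V →ₗ[ℂ] V)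

def isoProjI {G V : Type*} [Group G] [Fintype G] [AddCommGroup V] [Module ℂ V] {k : ℕ}
    (ρ : Representation ℂ (Fin k → G) V) (d : ℕ) (χ : G → ℂ) (I : Finset (Fin k)) :
    V →ₗ[ℂ] V :=
  ((d : ℂ) / (Fintype.card G : ℂ)) • ∑ g : G, starRingEnd ℂ (χ g) • (ρ (onI g I) : V →ₗ[ℂ] V)

/-!
The conjugates of the irreducible characters form an orthogonal basis of the class functions on `G`.
Orthogonality is classical; for completeness, let `f` be a class function orthogonal to them
all. The central element `∑ g, f g • g` of `ℂ[G]` acts on each irreducible by a scalar of trace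
zero (Schur), hence acts as zero on every simple `ℂ[G]`-module, hence lies in the Jacobson radical
of `ℂ[G]`, which vanishes by the theorem of Maschke. Expanding the indicator function of a conjugacy
class in this basis and pairing it with any function on `G`, here `g ↦ |⟪b, ρ g b⟫|²`, gives the
identity.
-/

open Module Representation
open scoped MonoidAlgebra

universe u

section IrreducibleRep

variable {G V : Type*} [Group G] [AddCommGroup V] [Module ℂ V] {ρ : Representation ℂ G V}

theorem IsIrreducibleRep.nontrivial (hρ : IsIrreducibleRep ρ) : Nontrivial V :=
  let ⟨v, hv⟩ := hρ.1
  ⟨v, 0, hv⟩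

theorem isIrreducibleRep_iff_isIrreducible : IsIrreducibleRep ρ ↔ ρ.IsIrreducible := by
  constructor
  · intro hρ
    have := hρ.nontrivial
    refine { exists_pair_ne := ⟨⊥, ⊤, fun h ↦ bot_ne_top (α := Submodule ℂ V) ?_⟩,
             eq_bot_or_eq_top := fun U ↦ ?_ }
    · exact congrArg Subrepresentation.toSubmodule h
    · exact (hρ.2 U.toSubmodule fun g _ hv ↦ U.apply_mem_toSubmodule g hv).imp
        (fun h ↦ Subrepresentation.toSubmodule_injective h)
        (fun h ↦ Subrepresentation.toSubmodule_injective h)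
  · intro hρ
    refine ⟨?_, fun U hU ↦ ?_⟩
    · by_contra! h
      refine bot_ne_top (α := Subrepresentation ρ) (SetLike.ext fun v ↦ ?_)
      rw [h v]
      exact iff_of_true (zero_mem (⊥ : Submodule ℂ V)) trivial
    · exact (eq_bot_or_eq_top (⟨U, hU⟩ : Subrepresentation ρ)).imp
        (congrArg Subrepresentation.toSubmodule) (congrArg Subrepresentation.toSubmodule)

theorem IsUnitaryRep.repChar_inv {V : Type*} [NormedAddCommGroup V] [InnerProductSpace ℂ V]
    [FiniteDimensional ℂ V] {ρ : Representation ℂ G V} (hρ : IsUnitaryRep ρ) (g : G) :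
    repChar ρ g⁻¹ = starRingEnd ℂ (repChar ρ g) := by
  simp only [repChar, LinearMap.trace_eq_sum_inner _ (stdOrthonormalBasis ℂ V), map_sum]
  refine Finset.sum_congr rfl fun i _ ↦ ?_
  rw [inner_conj_symm, ← hρ g, self_inv_apply]

end IrreducibleRep

section GroupAlgebra

variable {k G V : Type*}

theorem mem_center_of_coeff_conj_eq [Group G] [CommSemiring k] {z : k[G]}
    (hz : ∀ g h, z.coeff (h * g * h⁻¹) = z.coeff g) : z ∈ Submonoid.center k[G] := by
  refine Submonoid.mem_center_iff.2 fun a ↦ ?_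
  induction a using MonoidAlgebra.induction_on with
  | of h =>
    ext g
    have := hz (h⁻¹ * g) h
    simp_all [MonoidAlgebra.of_apply]
  | add a b ha hb => rw [mul_add, add_mul, ha, hb]
  | smul c a ha => rw [smul_mul_assoc, mul_smul_comm, ha]

variable [Monoid G]

theorem asAlgebraHom_eq_sum_coeff_smul [CommSemiring k] [AddCommMonoid V] [Module k V] [Fintype G]
    (ρ : Representation k G V) (z : k[G]) : ρ.asAlgebraHom z = ∑ g, z.coeff g • ρ g := by
  rw [asAlgebraHom_def, MonoidAlgebra.lift_apply]
  exact Finsupp.sum_fintype _ _ fun g ↦ zero_smul k (ρ g)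

theorem asAlgebraHom_eq_zero_of_trace_eq_zero [Field k] [IsAlgClosed k] [CharZero k]
    [AddCommGroup V] [Module k V] [FiniteDimensional k V] (ρ : Representation k G V)
    [ρ.IsIrreducible] {z : k[G]} (hz : z ∈ Submonoid.center k[G])
    (htr : LinearMap.trace k V (ρ.asAlgebraHom z) = 0) : ρ.asAlgebraHom z = 0 := by
  let T := IntertwiningMap.centralAlgebraMul ρ hz
  obtain ⟨c, hc⟩ := (IsIrreducible.algebraMap_intertwiningMap_bijective_of_isAlgClosed (ρ := ρ)).2 T
  have hscalar : ρ.asAlgebraHom z = c • (1 : End k V) :=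
    congrArg IntertwiningMap.toLinearMap hc.symm
  rw [hscalar, map_smul, LinearMap.trace_one, smul_eq_mul, mul_eq_zero, Nat.cast_eq_zero] at htr
  rcases htr with rfl | hdim
  · rw [hscalar, zero_smul]
  · have := finrank_zero_iff.1 hdim
    exact Subsingleton.elim _ _

theorem isIrreducible_of_equiv {V' : Type*} [Field k] [AddCommGroup V] [Module k V]
    [AddCommGroup V'] [Module k V'] {ρ : Representation k G V} {ρ' : Representation k G V'}
    (φ : ρ.Equiv ρ') [ρ.IsIrreducible] : ρ'.IsIrreducible := by
  let f := IntertwiningMap.equivLinearMapAsModule ρ ρ' φ.toIntertwiningMap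
  have hf : Function.Bijective f := EquivLike.bijective φ
  exact (irreducible_iff_isSimpleModule_asModule ρ').2
    (IsSimpleModule.congr (LinearEquiv.ofBijective f hf).symm)

theorem intertwiningMap_asAlgebraHom_apply {V' : Type*} [CommSemiring k] [AddCommMonoid V]
    [Module k V] [AddCommMonoid V'] [Module k V'] {ρ : Representation k G V}
    {ρ' : Representation k G V'} (φ : ρ.IntertwiningMap ρ') (z : k[G]) (v : V) :
    φ (ρ.asAlgebraHom z v) = ρ'.asAlgebraHom z (φ v) :=
  (IntertwiningMap.equivLinearMapAsModule ρ ρ' φ).map_smul z (ρ.asModuleEquiv.symm v)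

theorem asAlgebraHom_ofModule' (M : Type*) [CommSemiring k] [AddCommMonoid M] [Module k M]
    [Module k[G] M] [IsScalarTower k k[G] M] :
    (ofModule' (k := k) (G := G) M).asAlgebraHom = Algebra.lsmul k k M :=
  (MonoidAlgebra.lift k (End k M) G).apply_symm_apply _

theorem isIrreducible_ofModule' (M : Type*) [Field k] [AddCommGroup M] [Module k M]
    [Module k[G] M] [IsScalarTower k k[G] M] [IsSimpleModule k[G] M] :
    (ofModule' (k := k) (G := G) M).IsIrreducible := by
  let τ : Representation k G M := ofModule' M
  let e : τ.asModule ≃ₗ[k[G]] M :=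
    { τ.asModuleEquiv.toAddEquiv with
      map_smul' := fun z x ↦ congrArg (fun A ↦ A z (τ.asModuleEquiv x)) (asAlgebraHom_ofModule' M) }
  exact (irreducible_iff_isSimpleModule_asModule τ).2 (IsSimpleModule.congr e)

end GroupAlgebra

theorem eq_zero_of_forall_isSimpleModule_smul_eq_zero {R : Type u} [Ring R] [IsSemisimpleRing R]
    {r : R} (h : ∀ (M : Type u) [AddCommGroup M] [Module R M] [IsSimpleModule R M] (x : M),
      r • x = 0) : r = 0 := by
  suffices r ∈ Ring.jacobson R by rwa [IsSemisimpleRing.jacobson_eq_bot, Ideal.mem_bot] at this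
  refine Submodule.mem_sInf.2 fun I hI ↦ ?_
  have : IsSimpleModule R (R ⧸ I) := isSimpleModule_iff_isCoatom.2 hI
  have hmk := h (R ⧸ I) (Submodule.Quotient.mk 1)
  rwa [← Submodule.Quotient.mk_smul, Submodule.Quotient.mk_eq_zero, smul_eq_mul, mul_one] at hmk

namespace IsCompleteFamily

variable {G J : Type*} [Group G] {W : J → Type*} [∀ j, NormedAddCommGroup (W j)]
  [∀ j, InnerProductSpace ℂ (W j)] [∀ j, FiniteDimensional ℂ (W j)]
  {σ : ∀ j, Representation ℂ G (W j)}

theorem isIrreducible (hσ : IsCompleteFamily W σ) (j : J) : (σ j).IsIrreducible :=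
  isIrreducibleRep_iff_isIrreducible.1 (hσ.2.1 j)

theorem nonempty_equiv_iff_eq (hσ : IsCompleteFamily W σ) {i j : J} :
    Nonempty ((σ i).Equiv (σ j)) ↔ i = j := by
  refine ⟨fun ⟨φ⟩ ↦ ?_, ?_⟩
  · by_contra hij
    exact hσ.2.2.1 i j hij ⟨φ.toLinearEquiv, φ.toIntertwiningMap.isIntertwining⟩
  · rintro rfl
    exact ⟨.refl _⟩

-- Completeness only quantifies over `U : Type`; transporting `τ` to coordinates
-- in `Fin n → ℂ` reaches every universe.
theorem exists_equiv (hσ : IsCompleteFamily W σ) {V : Type*} [AddCommGroup V] [Module ℂ V]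
    [FiniteDimensional ℂ V] (τ : Representation ℂ G V) [τ.IsIrreducible] :
    ∃ j, Nonempty (τ.Equiv (σ j)) := by
  let e : V ≃ₗ[ℂ] (Fin (finrank ℂ V) → ℂ) := (finBasis ℂ V).equivFun
  let τ' : Representation ℂ G (Fin (finrank ℂ V) → ℂ) := (e.conjRingEquiv : _ →* _).comp τ
  let φ : τ.Equiv τ' := .mk e fun g ↦ by ext; simp [τ']
  have hτ' : τ'.IsIrreducible := isIrreducible_of_equiv φ
  obtain ⟨j, e', he'⟩ := hσ.2.2.2 _ τ' (isIrreducibleRep_iff_isIrreducible.2 hτ')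
  exact ⟨j, ⟨φ.trans (.mk e' fun g ↦ LinearMap.ext (he' g))⟩⟩

theorem eq_zero_of_asAlgebraHom_eq_zero [Finite G] (hσ : IsCompleteFamily W σ) {z : ℂ[G]}
    (hz : ∀ j, (σ j).asAlgebraHom z = 0) : z = 0 := by
  have : NeZero (Nat.card G : ℂ) := ⟨Nat.cast_ne_zero.2 Nat.card_pos.ne'⟩
  refine eq_zero_of_forall_isSimpleModule_smul_eq_zero fun S _ _ _ x ↦ ?_
  let _ : Module ℂ S := .compHom S (algebraMap ℂ ℂ[G])
  have : IsScalarTower ℂ ℂ[G] S := .of_algebraMap_smul fun _ _ ↦ rfl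
  have : Module.Finite ℂ ℂ[G] := .equiv (MonoidAlgebra.coeffLinearEquiv ℂ).symm
  have : FiniteDimensional ℂ S := Module.Finite.trans ℂ[G] S
  have : (ofModule' (k := ℂ) (G := G) S).IsIrreducible := isIrreducible_ofModule' S
  obtain ⟨j, ⟨φ⟩⟩ := hσ.exists_equiv (ofModule' (k := ℂ) (G := G) S)
  apply EquivLike.injective φ
  have hφ := intertwiningMap_asAlgebraHom_apply φ.toIntertwiningMap z x
  rw [hz j, asAlgebraHom_ofModule'] at hφ
  exact hφ.trans (map_zero φ.toIntertwiningMap).symm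

variable [Fintype G]

theorem eq_zero_of_sum_mul_repChar_eq_zero (hσ : IsCompleteFamily W σ) {f : G → ℂ}
    (hf : ∀ g h, f (h * g * h⁻¹) = f g) (hfσ : ∀ j, ∑ g, f g * repChar (σ j) g = 0) : f = 0 := by
  let z : ℂ[G] := .ofCoeff (Finsupp.equivFunOnFinite.symm f)
  have hz : z ∈ Submonoid.center ℂ[G] := mem_center_of_coeff_conj_eq hf
  have hσz (j : J) : (σ j).asAlgebraHom z = 0 := by
    have := hσ.isIrreducible j
    refine asAlgebraHom_eq_zero_of_trace_eq_zero (σ j) hz ?_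
    simpa [asAlgebraHom_eq_sum_coeff_smul, z, repChar] using hfσ j
  have := hσ.eq_zero_of_asAlgebraHom_eq_zero hσz
  simpa [z, DFunLike.ext_iff, funext_iff] using this

open scoped Classical in
theorem sum_conj_repChar_mul_repChar (hσ : IsCompleteFamily W σ) (i j : J) :
    ∑ g, starRingEnd ℂ (repChar (σ i) g) * repChar (σ j) g =
      if i = j then (Fintype.card G : ℂ) else 0 := by
  have := hσ.isIrreducible i
  have := hσ.isIrreducible j
  have hG : (Nat.card G : ℂ) ≠ 0 := Nat.cast_ne_zero.2 Nat.card_pos.ne'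
  have := invertibleOfNonzero hG
  have horth := char_orthonormal (σ j) (σ i)
  simp only [hσ.nonempty_equiv_iff_eq, inv_mul_eq_iff_eq_mul₀ hG, mul_ite, mul_one, mul_zero]
    at horth
  rw [← Nat.card_eq_fintype_card]
  convert! horth using 2 with g
  rw [← (hσ.1 i).repChar_inv, mul_comm]
  rfl

variable [Fintype J]

theorem eq_sum_conj_repChar (hσ : IsCompleteFamily W σ) {f : G → ℂ}
    (hf : ∀ g h, f (h * g * h⁻¹) = f g) (x : G) :
    f x = ∑ j, (∑ g, f g * repChar (σ j) g) / Fintype.card G * starRingEnd ℂ (repChar (σ j) x) := by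
  classical
  refine sub_eq_zero.1 <| congrFun (hσ.eq_zero_of_sum_mul_repChar_eq_zero
    (f := fun x ↦ f x - ∑ j, (∑ g, f g * repChar (σ j) g) / Fintype.card G *
      starRingEnd ℂ (repChar (σ j) x)) ?_ ?_) x
  · intro g h
    simp only [hf, show ∀ j, repChar (σ j) (h * g * h⁻¹) = repChar (σ j) g from
      fun j ↦ char_conj (σ j) g h]
  · intro i
    simp only [sub_mul, Finset.sum_sub_distrib, Finset.sum_mul]
    rw [Finset.sum_comm]
    simp only [mul_assoc, ← Finset.mul_sum, hσ.sum_conj_repChar_mul_repChar]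
    simp

theorem ite_mem_eq_sum_repChar (hσ : IsCompleteFamily W σ) {M : Finset G} {m₀ : G}
    [DecidableEq G] (hM : ∀ m, m ∈ M ↔ IsConj m₀ m) (x : G) :
    (if x ∈ M then 1 else 0 : ℂ) = M.card / Fintype.card G *
      ∑ j, repChar (σ j) m₀ * starRingEnd ℂ (repChar (σ j) x) := by
  have hconj (g h : G) : h * g * h⁻¹ ∈ M ↔ g ∈ M := by
    rw [hM, hM]
    have hgh : IsConj g (h * g * h⁻¹) := isConj_iff.2 ⟨h, rfl⟩
    exact ⟨fun k ↦ k.trans hgh.symm, fun k ↦ k.trans hgh⟩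
  have hsum (j : J) : ∑ g, (if g ∈ M then 1 else 0 : ℂ) * repChar (σ j) g =
      M.card * repChar (σ j) m₀ := by
    have hconst : ∀ m ∈ M, repChar (σ j) m = repChar (σ j) m₀ := by
      intro m hm
      obtain ⟨c, rfl⟩ := isConj_iff.1 ((hM m).1 hm)
      exact char_conj (σ j) m₀ c
    simp [Finset.sum_congr rfl hconst]
  rw [hσ.eq_sum_conj_repChar (f := fun g ↦ if g ∈ M then 1 else 0) (by simp [hconj]),
    Finset.mul_sum]
  refine Finset.sum_congr rfl fun j _ ↦ ?_
  rw [hsum]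
  ring

end IsCompleteFamily

theorem stmt2_general {G : Type*} [Group G] [Fintype G] {J : Type*} [Fintype J] (W : J → Type*)
    [∀ j, NormedAddCommGroup (W j)] [∀ j, InnerProductSpace ℂ (W j)]
    [∀ j, FiniteDimensional ℂ (W j)] (σ : ∀ j, Representation ℂ G (W j))
    (hfam : IsCompleteFamily W σ) {E : Type*} [AddCommGroup E] [Module ℂ E] (φ : G → E)
    (M : Finset G) (m₀ : G) (hM : ∀ m : G, m ∈ M ↔ IsConj m₀ m) :
    (1 / (M.card : ℂ)) • ∑ m ∈ M, φ m =
      ∑ j, (repChar (σ j) m₀ / (finrank ℂ (W j) : ℂ)) •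
        ((finrank ℂ (W j) : ℂ) / (Fintype.card G : ℂ)) •
          ∑ g : G, starRingEnd ℂ (repChar (σ j) g) • φ g := by
  classical
  have hMcard : (M.card : ℂ) ≠ 0 :=
    Nat.cast_ne_zero.2 (Finset.card_ne_zero_of_mem ((hM m₀).2 (.refl m₀)))
  have hdim (j : J) : (finrank ℂ (W j) : ℂ) ≠ 0 := by
    have := (hfam.2.1 j).nontrivial
    exact Nat.cast_ne_zero.2 finrank_pos.ne'
  calc (1 / (M.card : ℂ)) • ∑ m ∈ M, φ m
      = (1 / (M.card : ℂ)) • ∑ g, (if g ∈ M then 1 else 0 : ℂ) • φ g := by simp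
    _ = ∑ g, ∑ j, (repChar (σ j) m₀ / Fintype.card G * starRingEnd ℂ (repChar (σ j) g)) • φ g := by
        simp only [hfam.ite_mem_eq_sum_repChar hM, Finset.smul_sum, smul_smul, Finset.mul_sum,
          Finset.sum_smul]
        congr! 3
        field_simp
    _ = _ := by
        rw [Finset.sum_comm]
        simp only [Finset.smul_sum, smul_smul]
        congr! 3 with j _ g
        have := hdim j
        field_simp

/-- Second-moment identity: the average over `m ∈ M` of `|⟪b, ρ m b⟫|²` equals
`Σ_j (χ_j(m₀)/d_j) · (d_j/|G|) Σ_g conj(χ_j(g)) |⟪b, ρ g b⟫|²`. -/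
theorem stmt2 {G : Type*} [Group G] [Fintype G]
    {J : Type*} [Fintype J]
    (W : J → Type*) [∀ j, NormedAddCommGroup (W j)] [∀ j, InnerProductSpace ℂ (W j)]
    [∀ j, FiniteDimensional ℂ (W j)]
    (σ : ∀ j, Representation ℂ G (W j)) (hfam : IsCompleteFamily W σ)
    {V : Type*} [NormedAddCommGroup V] [InnerProductSpace ℂ V] [FiniteDimensional ℂ V]
    (ρ : Representation ℂ G V) (hρu : IsUnitaryRep ρ)
    (M : Finset G) (m₀ : G) (hm₀M : m₀ ∈ M)
    (hM : ∀ m : G, m ∈ M ↔ IsConj m₀ m)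
    (hinv : ∀ m ∈ M, m * m = 1 ∧ m ≠ 1)
    (b : V) :
    (1 / (M.card : ℂ)) * ∑ m ∈ M, (‖⟪b, ρ m b⟫_ℂ‖ : ℂ) ^ 2
      = ∑ j, repChar (σ j) m₀ / (Module.finrank ℂ (W j) : ℂ) *
          ((Module.finrank ℂ (W j) : ℂ) / (Fintype.card G : ℂ) *
            ∑ g : G, starRingEnd ℂ (repChar (σ j) g) * (‖⟪b, ρ g b⟫_ℂ‖ : ℂ) ^ 2) := by
  simpa only [smul_eq_mul] using
    stmt2_general W σ hfam (fun g ↦ (‖⟪b, ρ g b⟫_ℂ‖ : ℂ) ^ 2) M m₀ hM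
end
end

section
/- Let G be a finite group, let ρ be an irreducible unitary representation of G on a finite-dimensional complex inner product space V with dimension d_ρ and character χ_ρ, and let M ⊆ G be a conjugacy class of involutions with representative m₀ (so χ_ρ(m₀) is a real number). Then for every b ∈ V, (1/|M|) Σ_{m∈M} ‖(1/2)(b + ρ(m) b)‖² = (1/2)·‖b‖²·(1 + χ_ρ(m₀)/d_ρ). -/
noncomputable section

open scoped BigOperators InnerProductSpace

/-!
The class sum `∑ m ∈ M, ρ m` commutes with the representation, so by Schur's lemma it is a scalar,
and comparing traces identifies the scalar as `|M| χ(m₀) / d`. Since `ρ m` is an isometry,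
`‖(b + ρ m b) / 2‖² = (‖b‖² + Re ⟪b, ρ m b⟫) / 2`; summing over the class replaces `ρ m` by that
scalar. For involutions `ρ m₀` is self-adjoint, so `χ(m₀)` is its own real part.
-/

theorem commute_sum_of_forall_conj_mem {G R : Type*} [Group G] [NonAssocSemiring R] (f : G →* R)
    {M : Finset G} (hM : ∀ g, ∀ m ∈ M, g * m * g⁻¹ ∈ M) (g : G) :
    Commute (f g) (∑ m ∈ M, f m) := by
  rw [commute_iff_eq, Finset.mul_sum, Finset.sum_mul]
  refine Finset.sum_equiv (MulAut.conj g).toEquiv (fun m ↦ ⟨hM g m, fun hm ↦ ?_⟩) fun m _ ↦ ?_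
  · simpa [mul_assoc] using hM g⁻¹ _ hm
  · simp [← map_mul]

theorem card_ne_zero_of_mem_iff_isConj {G : Type*} [Monoid G] {M : Finset G} {m₀ : G}
    (hM : ∀ m, m ∈ M ↔ IsConj m₀ m) : M.card ≠ 0 :=
  Finset.card_ne_zero_of_mem ((hM m₀).2 (IsConj.refl m₀))

theorem finrank_smul_eq_trace_smul_one {G k V : Type*} [Monoid G] [Field k] [IsAlgClosed k]
    [AddCommGroup V] [Module k V] [FiniteDimensional k V] {ρ : Representation k G V}
    [ρ.IsIrreducible] {T : Module.End k V} (hT : ∀ g, Commute (ρ g) T) :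
    (Module.finrank k V : k) • T = LinearMap.trace k V T • 1 := by
  let f : ρ.IntertwiningMap ρ := ⟨T, fun g ↦ (hT g).eq.symm⟩
  obtain ⟨c, hc⟩ :=
    (Representation.IsIrreducible.algebraMap_intertwiningMap_bijective_of_isAlgClosed
      (ρ := ρ)).surjective f
  have hTc : T = c • 1 := congrArg Representation.IntertwiningMap.toLinearMap hc.symm
  rw [hTc, map_smul, LinearMap.trace_one, smul_smul, smul_eq_mul, mul_comm]

section ClassSum

variable {G k V : Type*} [Group G] [Field k] [AddCommGroup V] [Module k V]
  {ρ : Representation k G V} {M : Finset G} {m₀ : G}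

theorem trace_sum_eq_card_mul_character (hM : ∀ m ∈ M, IsConj m₀ m) :
    LinearMap.trace k V (∑ m ∈ M, ρ m) = M.card * ρ.character m₀ := by
  have hchar : ∀ m ∈ M, LinearMap.trace k V (ρ m) = ρ.character m₀ := by
    intro m hm
    obtain ⟨g, rfl⟩ := isConj_iff.1 (hM m hm)
    exact ρ.char_conj m₀ g
  rw [map_sum, Finset.sum_congr rfl hchar, Finset.sum_const, nsmul_eq_mul]

theorem finrank_smul_sum_eq_smul_one [FiniteDimensional k V] [IsAlgClosed k] [ρ.IsIrreducible]
    (hM : ∀ m, m ∈ M ↔ IsConj m₀ m) :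
    (Module.finrank k V : k) • ∑ m ∈ M, ρ m = (M.card * ρ.character m₀) • 1 := by
  have hconj : ∀ g, ∀ m ∈ M, g * m * g⁻¹ ∈ M := fun g m hm ↦
    (hM _).2 (((hM m).1 hm).trans (isConj_iff.2 ⟨g, rfl⟩))
  rw [finrank_smul_eq_trace_smul_one (commute_sum_of_forall_conj_mem ρ hconj),
    trace_sum_eq_card_mul_character fun m ↦ (hM m).1]

end ClassSum

theorem IsIrreducibleRep.isIrreducible {G V : Type*} [Group G] [AddCommGroup V] [Module ℂ V]
    {ρ : Representation ℂ G V} (hρ : IsIrreducibleRep ρ) : ρ.IsIrreducible := by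
  obtain ⟨⟨v, hv⟩, hinvariant⟩ := hρ
  have hne : (⊥ : Subrepresentation ρ) ≠ ⊤ := fun h ↦
    hv ((Submodule.mem_bot ℂ).1 <|
      (congrArg Subrepresentation.toSubmodule h).ge (Submodule.mem_top (x := v)))
  exact
    { exists_pair_ne := ⟨⊥, ⊤, hne⟩
      eq_bot_or_eq_top W := (hinvariant W.toSubmodule W.apply_mem_toSubmodule).imp
        (Subrepresentation.toSubmodule_injective ·) (Subrepresentation.toSubmodule_injective ·) }

section InnerProductSpace

variable {𝕜 E : Type*} [RCLike 𝕜] [NormedAddCommGroup E] [InnerProductSpace 𝕜 E]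

theorem norm_half_smul_add_sq {u v : E} (h : ‖u‖ = ‖v‖) :
    ‖(1 / 2 : 𝕜) • (u + v)‖ ^ 2 = 1 / 2 * (‖u‖ ^ 2 + RCLike.re ⟪u, v⟫_𝕜) := by
  rw [norm_smul, mul_pow, norm_add_sq (𝕜 := 𝕜), ← h, norm_div, norm_one, RCLike.norm_ofNat]
  ring

theorem ofReal_re_trace_of_isSymmetric [FiniteDimensional 𝕜 E] {T : E →ₗ[𝕜] E}
    (hT : T.IsSymmetric) :
    (RCLike.re (LinearMap.trace 𝕜 E T) : 𝕜) = LinearMap.trace 𝕜 E T := by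
  rw [hT.re_trace_eq_sum_eigenvalues rfl, hT.trace_eq_sum_eigenvalues rfl]

end InnerProductSpace

section UnitaryRep

variable {G V : Type*} [Group G] [NormedAddCommGroup V] [InnerProductSpace ℂ V]
  {ρ : Representation ℂ G V}

theorem IsUnitaryRep.norm_apply (hρ : IsUnitaryRep ρ) (g : G) (v : V) : ‖ρ g v‖ = ‖v‖ :=
  ((ρ g).isometryOfInner (hρ g)).norm_map v

theorem IsUnitaryRep.isSymmetric_apply (hρ : IsUnitaryRep ρ) {g : G} (hg : g * g = 1) :
    (ρ g).IsSymmetric := by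
  intro v w
  rw [← hρ g v, ← Module.End.mul_apply, ← map_mul, hg, map_one, Module.End.one_apply]

theorem IsUnitaryRep.ofReal_re_repChar [FiniteDimensional ℂ V] (hρ : IsUnitaryRep ρ) {g : G}
    (hg : g * g = 1) : ((repChar ρ g).re : ℂ) = repChar ρ g :=
  ofReal_re_trace_of_isSymmetric (hρ.isSymmetric_apply hg)

theorem IsIrreducibleRep.finrank_mul_sum_inner_apply [FiniteDimensional ℂ V]
    (hρ : IsIrreducibleRep ρ) {M : Finset G} {m₀ : G} (hM : ∀ m, m ∈ M ↔ IsConj m₀ m) (b : V) :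
    Module.finrank ℂ V * ∑ m ∈ M, ⟪b, ρ m b⟫_ℂ = M.card * repChar ρ m₀ * (‖b‖ : ℂ) ^ 2 := by
  have := hρ.isIrreducible
  have hscalar := congrArg (⟪b, · b⟫_ℂ) (finrank_smul_sum_eq_smul_one (ρ := ρ) hM)
  simpa only [LinearMap.smul_apply, LinearMap.sum_apply, Module.End.one_apply, inner_smul_right,
    inner_sum, inner_self_eq_norm_sq_to_K, Complex.coe_algebraMap, repChar,
    Representation.character] using hscalar

theorem IsIrreducibleRep.average_re_inner_apply [FiniteDimensional ℂ V] (hρ : IsIrreducibleRep ρ)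
    {M : Finset G} {m₀ : G} (hM : ∀ m, m ∈ M ↔ IsConj m₀ m) (b : V) :
    (1 / (M.card : ℝ)) * ∑ m ∈ M, (⟪b, ρ m b⟫_ℂ).re
      = ‖b‖ ^ 2 * ((repChar ρ m₀).re / Module.finrank ℂ V) := by
  have hcard : (M.card : ℝ) ≠ 0 := Nat.cast_ne_zero.2 (card_ne_zero_of_mem_iff_isConj hM)
  have hfinrank : (Module.finrank ℂ V : ℝ) ≠ 0 :=
    Nat.cast_ne_zero.2 (Module.finrank_pos_iff_exists_ne_zero.2 hρ.1).ne'
  have hre := congrArg Complex.re (hρ.finrank_mul_sum_inner_apply hM b)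
  rw [← Complex.ofReal_pow, Complex.re_mul_ofReal, ← Complex.ofReal_natCast,
    ← Complex.ofReal_natCast, Complex.re_ofReal_mul, Complex.re_ofReal_mul, Complex.re_sum] at hre
  field_simp
  linarith

end UnitaryRep

theorem stmt3_general {G : Type*} [Group G]
    {V : Type*} [NormedAddCommGroup V] [InnerProductSpace ℂ V] [FiniteDimensional ℂ V]
    {ρ : Representation ℂ G V} (hρu : IsUnitaryRep ρ) (hρi : IsIrreducibleRep ρ)
    {M : Finset G} {m₀ : G} (hM : ∀ m : G, m ∈ M ↔ IsConj m₀ m) (b : V) :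
    (1 / (M.card : ℝ)) * ∑ m ∈ M, ‖(1 / 2 : ℂ) • (b + ρ m b)‖ ^ 2
      = 1 / 2 * ‖b‖ ^ 2 * (1 + (repChar ρ m₀).re / Module.finrank ℂ V) := by
  have hcard : (M.card : ℝ) ≠ 0 := Nat.cast_ne_zero.2 (card_ne_zero_of_mem_iff_isConj hM)
  calc (1 / (M.card : ℝ)) * ∑ m ∈ M, ‖(1 / 2 : ℂ) • (b + ρ m b)‖ ^ 2
      = (1 / (M.card : ℝ)) * ∑ m ∈ M, 1 / 2 * (‖b‖ ^ 2 + (⟪b, ρ m b⟫_ℂ).re) := by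
        simp only [norm_half_smul_add_sq (hρu.norm_apply _ b).symm, RCLike.re_eq_complex_re]
    _ = 1 / 2 * (‖b‖ ^ 2 + (1 / (M.card : ℝ)) * ∑ m ∈ M, (⟪b, ρ m b⟫_ℂ).re) := by
        rw [← Finset.mul_sum, Finset.sum_add_distrib, Finset.sum_const, nsmul_eq_mul]
        field_simp
    _ = 1 / 2 * ‖b‖ ^ 2 * (1 + (repChar ρ m₀).re / Module.finrank ℂ V) := by
        rw [hρi.average_re_inner_apply hM]
        ring

/-- For an irreducible unitary representation `ρ` and a conjugacy class `M` of
involutions, the average over `m ∈ M` of `‖(1/2)(b + ρ m b)‖²` equals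
`(1/2)‖b‖²(1 + χ_ρ(m₀)/d_ρ)`. -/
theorem stmt3 {G : Type*} [Group G] [Fintype G]
    {V : Type*} [NormedAddCommGroup V] [InnerProductSpace ℂ V] [FiniteDimensional ℂ V]
    (ρ : Representation ℂ G V) (hρu : IsUnitaryRep ρ) (hρi : IsIrreducibleRep ρ)
    (M : Finset G) (m₀ : G) (hm₀M : m₀ ∈ M)
    (hM : ∀ m : G, m ∈ M ↔ IsConj m₀ m)
    (hinv : ∀ m ∈ M, m * m = 1 ∧ m ≠ 1)
    (b : V) :
    (1 / (M.card : ℂ)) * ∑ m ∈ M, (‖(1/2 : ℂ) • (b + ρ m b)‖ : ℂ) ^ 2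
      = 1/2 * (‖b‖ : ℂ) ^ 2 * (1 + repChar ρ m₀ / (Module.finrank ℂ V : ℂ)) := by
  rw [← hρu.ofReal_re_repChar (hinv m₀ hm₀M).1]
  simpa using congrArg Complex.ofReal (stmt3_general hρu hρi hM b)
end
end
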